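/- The Ehrhard half-space rearrangement is an isoperimetric rearrangement for the standard Gaussian measure and cost ‖x−y‖: for every Borel A ⊆ ℝⁿ and ε > 0, γ(A_ε) ≥ γ((A*)_ε), where A* = {x : x₁ < Φ^{-1}(γ(A))}, A_ε = {x : ∃ y ∈ A, ‖x−y‖ < ε}, and γ is the standard Gaussian measure. -/

import Mathlib

open Set MeasureTheory

/-- The standard Gaussian measure on `ℝⁿ`. -/
noncomputable def stdGaussian (n : ℕ) : Measure (EuclideanSpace ℝ (Fin n)) :=
  volume.withDensity
    (fun x => ENNReal.ofReal ((2 * Real.pi) ^ (-(n : ℝ) / 2) * Real.exp (-‖x‖ ^ 2 / 2)))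

/-- The standard Gaussian cumulative distribution function. -/
noncomputable def gaussCDF (t : ℝ) : ℝ :=
  ∫ s in Set.Iio t, Real.exp (-s ^ 2 / 2) / Real.sqrt (2 * Real.pi)

/-- The metric `ε`-enlargement. -/
def enlarge {n : ℕ} (A : Set (EuclideanSpace ℝ (Fin n))) (ε : ℝ) :
    Set (EuclideanSpace ℝ (Fin n)) :=
  {x | ∃ y ∈ A, ‖x - y‖ < ε}

/-! Let `Φ` be the Gaussian distribution function, `φ` its density, and `I = φ ∘ Φ⁻¹` the Gaussian
isoperimetric profile. From `I * I'' = -1` and the convexity of `(Φ⁻¹)²` one gets Bobkov's two-point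
inequality for `I`. It tensorizes along random walks, since `(x, y) ↦ √(x² + y²)` is a norm, and the
central limit theorem turns it into `I (∫ f dγ) ≤ ∫ √(I(f)² + |∇f|²) dγ`. For `f = Φ(t - g)` with
`g` `L`-Lipschitz the right-hand side is at most `√(1 + L²) ∫ φ(t - g) dγ`, so that
`t ↦ Φ⁻¹(∫ Φ(t - g) dγ)` grows at rate at least `1 / √(1 + L²)`. With `g = L * dist(·, A)` and
`L → ∞` this becomes `γ(A_ε) ≥ Φ(Φ⁻¹(γ A) + ε)`, which is an equality for half-spaces. -/

open Filter Topology
open ProbabilityTheory (gaussianReal gaussianPDFReal)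
open scoped RealInnerProductSpace NNReal

local notation "φ" => gaussianPDFReal 0 1
local notation "γ" => ProbabilityTheory.stdGaussian

/-! ### The Gaussian profile -/

theorem hasDerivAt_gaussianPDFReal (μ : ℝ) (v : ℝ≥0) (x : ℝ) :
    HasDerivAt (gaussianPDFReal μ v) (-((x - μ) / v) * gaussianPDFReal μ v x) x := by
  have hexp : HasDerivAt (fun y => -(y - μ) ^ 2 / (2 * v)) (-((x - μ) / v)) x := by
    refine ((((hasDerivAt_id x).sub_const μ).pow 2).neg.div_const (2 * (v : ℝ))).congr_deriv ?_
    simp only [id, Nat.cast_ofNat, Nat.add_one_sub_one, pow_one, mul_one]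
    ring
  refine (hexp.exp.const_mul (√(2 * Real.pi * v))⁻¹).congr_deriv ?_
  simp only [gaussianPDFReal]
  ring

theorem continuous_gaussianPDFReal (μ : ℝ) (v : ℝ≥0) : Continuous (gaussianPDFReal μ v) :=
  continuous_iff_continuousAt.2 fun x => (hasDerivAt_gaussianPDFReal μ v x).continuousAt

theorem gaussianPDFReal_zero_neg (v : ℝ≥0) (x : ℝ) :
    gaussianPDFReal 0 v (-x) = gaussianPDFReal 0 v x := by
  simp only [gaussianPDFReal, sub_zero, neg_sq]

theorem stdGaussianPDF_pos (x : ℝ) : 0 < φ x :=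
  ProbabilityTheory.gaussianPDFReal_pos 0 1 x one_ne_zero

theorem inv_sqrt_two_pi_le_one : (√(2 * Real.pi))⁻¹ ≤ 1 :=
  inv_le_one_of_one_le₀ (Real.one_le_sqrt.2 (by linarith [Real.pi_gt_three]))

theorem norm_stdGaussianPDF_le_one (x : ℝ) : ‖φ x‖ ≤ 1 := by
  rw [Real.norm_of_nonneg (stdGaussianPDF_pos x).le]
  simp only [gaussianPDFReal, sub_zero, NNReal.coe_one, mul_one]
  refine mul_le_one₀ inv_sqrt_two_pi_le_one (Real.exp_nonneg _) (Real.exp_le_one_iff.2 ?_)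
  exact div_nonpos_of_nonpos_of_nonneg (neg_nonpos.2 (sq_nonneg x)) zero_le_two

theorem gaussCDF_eq_setIntegral (t : ℝ) : gaussCDF t = ∫ s in Iio t, φ s := by
  refine setIntegral_congr_fun measurableSet_Iio fun s _ => ?_
  simp only [gaussianPDFReal, NNReal.coe_one, mul_one, sub_zero]
  rw [div_eq_inv_mul]

theorem gaussCDF_eq_measureReal_Iio (t : ℝ) : gaussCDF t = (gaussianReal 0 1).real (Iio t) := by
  rw [measureReal_def, ProbabilityTheory.gaussianReal_apply_eq_integral _ one_ne_zero,
    ENNReal.toReal_ofReal (integral_nonneg fun s => (stdGaussianPDF_pos s).le),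
    gaussCDF_eq_setIntegral]

theorem gaussCDF_eq_cdf : gaussCDF = ProbabilityTheory.cdf (gaussianReal 0 1) := by
  ext t
  have := ProbabilityTheory.nullSingletonClass_gaussianReal (μ := 0) (v := 1) one_ne_zero
  rw [gaussCDF_eq_measureReal_Iio, ProbabilityTheory.cdf_eq_real]
  exact measureReal_congr Iio_ae_eq_Iic

theorem hasDerivAt_gaussCDF (t : ℝ) : HasDerivAt gaussCDF (φ t) t := by
  have hint : Integrable φ := ProbabilityTheory.integrable_gaussianPDFReal 0 1
  have hcont : Continuous φ := continuous_gaussianPDFReal 0 1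
  have heq : gaussCDF = fun u => gaussCDF 0 + ∫ s in (0 : ℝ)..u, φ s := by
    ext u
    rw [← intervalIntegral.integral_Iic_sub_Iic hint.integrableOn hint.integrableOn,
      integral_Iic_eq_integral_Iio, integral_Iic_eq_integral_Iio, ← gaussCDF_eq_setIntegral,
      ← gaussCDF_eq_setIntegral, add_sub_cancel]
  rw [heq]
  exact (intervalIntegral.integral_hasDerivAt_right hint.intervalIntegrable
    (hcont.stronglyMeasurableAtFilter _ _) hcont.continuousAt).const_add _

theorem continuous_gaussCDF : Continuous gaussCDF :=
  continuous_iff_continuousAt.2 fun t => (hasDerivAt_gaussCDF t).continuousAt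

theorem strictMono_gaussCDF : StrictMono gaussCDF :=
  strictMono_of_deriv_pos fun t => by
    rw [(hasDerivAt_gaussCDF t).deriv]
    exact stdGaussianPDF_pos t

theorem tendsto_gaussCDF_atTop : Tendsto gaussCDF atTop (𝓝 1) :=
  gaussCDF_eq_cdf ▸ ProbabilityTheory.tendsto_cdf_atTop _

theorem tendsto_gaussCDF_atBot : Tendsto gaussCDF atBot (𝓝 0) :=
  gaussCDF_eq_cdf ▸ ProbabilityTheory.tendsto_cdf_atBot _

theorem gaussCDF_mem_Ioo (t : ℝ) : gaussCDF t ∈ Ioo (0 : ℝ) 1 := by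
  constructor
  · refine lt_of_le_of_lt ?_ (strictMono_gaussCDF (sub_one_lt t))
    exact gaussCDF_eq_cdf ▸ ProbabilityTheory.cdf_nonneg _ _
  · refine lt_of_lt_of_le (strictMono_gaussCDF (lt_add_one t)) ?_
    exact gaussCDF_eq_cdf ▸ ProbabilityTheory.cdf_le_one _ _

theorem norm_gaussCDF_le_one (t : ℝ) : ‖gaussCDF t‖ ≤ 1 := by
  rw [Real.norm_of_nonneg (gaussCDF_mem_Ioo t).1.le]
  exact (gaussCDF_mem_Ioo t).2.le

theorem gaussCDF_neg (t : ℝ) : gaussCDF (-t) = 1 - gaussCDF t := by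
  have hmap : (gaussianReal 0 1).map (fun x => -x) = gaussianReal 0 1 := by
    rw [ProbabilityTheory.gaussianReal_map_neg, neg_zero]
  have hpre : (fun x : ℝ => -x) ⁻¹' Iio (-t) = (Iic t)ᶜ := by
    ext x
    simp only [mem_preimage, mem_Iio, mem_compl_iff, mem_Iic, neg_lt_neg_iff, not_le]
  rw [gaussCDF_eq_measureReal_Iio, ← hmap, map_measureReal_apply measurable_neg measurableSet_Iio,
    hpre, probReal_compl_eq_one_sub measurableSet_Iic, gaussCDF_eq_cdf,
    ProbabilityTheory.cdf_eq_real]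

/-- The Gaussian quantile function `Φ⁻¹`, meaningful on `(0, 1)` and a junk value elsewhere. -/
noncomputable def gaussQuantile (p : ℝ) : ℝ := Function.invFun gaussCDF p

theorem gaussQuantile_gaussCDF (t : ℝ) : gaussQuantile (gaussCDF t) = t :=
  Function.leftInverse_invFun strictMono_gaussCDF.injective t

theorem gaussCDF_gaussQuantile {p : ℝ} (hp : p ∈ Ioo (0 : ℝ) 1) :
    gaussCDF (gaussQuantile p) = p := by
  refine Function.invFun_eq ?_
  obtain ⟨a, ha⟩ := (tendsto_gaussCDF_atBot.eventually (gt_mem_nhds hp.1)).exists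
  obtain ⟨b, hb⟩ := (tendsto_gaussCDF_atTop.eventually (lt_mem_nhds hp.2)).exists
  exact mem_range_of_exists_le_of_exists_ge continuous_gaussCDF ⟨a, ha.le⟩ ⟨b, hb.le⟩

theorem strictMonoOn_gaussQuantile : StrictMonoOn gaussQuantile (Ioo 0 1) := fun p hp q hq h => by
  rwa [← strictMono_gaussCDF.lt_iff_lt, gaussCDF_gaussQuantile hp, gaussCDF_gaussQuantile hq]

theorem gaussQuantile_one_sub {p : ℝ} (hp : p ∈ Ioo (0 : ℝ) 1) :
    gaussQuantile (1 - p) = -gaussQuantile p := by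
  rw [← gaussQuantile_gaussCDF (-gaussQuantile p), gaussCDF_neg, gaussCDF_gaussQuantile hp]

/-- The Gaussian isoperimetric profile `φ ∘ Φ⁻¹`: the Gaussian perimeter of a half-space of
measure `p`. -/
noncomputable def gaussProfile (p : ℝ) : ℝ := φ (gaussQuantile p)

theorem gaussProfile_gaussCDF (t : ℝ) : gaussProfile (gaussCDF t) = φ t := by
  rw [gaussProfile, gaussQuantile_gaussCDF]

theorem gaussProfile_pos (p : ℝ) : 0 < gaussProfile p := stdGaussianPDF_pos _

theorem gaussProfile_le_one (p : ℝ) : gaussProfile p ≤ 1 :=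
  (le_abs_self _).trans (norm_stdGaussianPDF_le_one _)

theorem gaussProfile_one_sub {p : ℝ} (hp : p ∈ Ioo (0 : ℝ) 1) :
    gaussProfile (1 - p) = gaussProfile p := by
  rw [gaussProfile, gaussQuantile_one_sub hp, gaussianPDFReal_zero_neg, gaussProfile]

theorem hasDerivAt_gaussQuantile {p : ℝ} (hp : p ∈ Ioo (0 : ℝ) 1) :
    HasDerivAt gaussQuantile (gaussProfile p)⁻¹ p := by
  have himage : gaussQuantile '' Ioo (0 : ℝ) 1 = univ :=
    eq_univ_of_forall fun t => ⟨gaussCDF t, gaussCDF_mem_Ioo t, gaussQuantile_gaussCDF t⟩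
  have hcont : ContinuousAt gaussQuantile p :=
    strictMonoOn_gaussQuantile.continuousAt_of_image_mem_nhds (Ioo_mem_nhds hp.1 hp.2)
      (himage ▸ univ_mem)
  refine HasDerivAt.of_local_left_inverse hcont (hasDerivAt_gaussCDF _) (gaussProfile_pos p).ne' ?_
  filter_upwards [Ioo_mem_nhds hp.1 hp.2] with q hq using gaussCDF_gaussQuantile hq

theorem hasDerivAt_gaussProfile {p : ℝ} (hp : p ∈ Ioo (0 : ℝ) 1) :
    HasDerivAt gaussProfile (-gaussQuantile p) p := by
  refine ((hasDerivAt_gaussianPDFReal 0 1 _).comp p (hasDerivAt_gaussQuantile hp)).congr_deriv ?_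
  rw [gaussProfile, mul_assoc, mul_inv_cancel₀ (stdGaussianPDF_pos _).ne']
  simp only [sub_zero, NNReal.coe_one, div_one, mul_one]

theorem continuousOn_gaussProfile : ContinuousOn gaussProfile (Ioo 0 1) := fun _ hp =>
  (hasDerivAt_gaussProfile hp).continuousAt.continuousWithinAt

theorem convexOn_sq_gaussQuantile : ConvexOn ℝ (Ioo 0 1) fun p => gaussQuantile p ^ 2 := by
  have hderiv : ∀ p ∈ Ioo (0 : ℝ) 1,
      HasDerivAt (fun p => gaussQuantile p ^ 2) (2 * (gaussQuantile p / φ (gaussQuantile p))) p :=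
    fun p hp => ((hasDerivAt_gaussQuantile hp).pow 2).congr_deriv (by
      simp only [gaussProfile, Nat.cast_ofNat, Nat.add_one_sub_one, pow_one]
      ring)
  have hratio : Monotone fun x : ℝ => x / φ x := by
    refine monotone_of_hasDerivAt_nonneg (f' := fun x => (1 + x ^ 2) / φ x) (fun x => ?_)
      fun x => div_nonneg (by positivity) (stdGaussianPDF_pos x).le
    refine ((hasDerivAt_id x).div (hasDerivAt_gaussianPDFReal 0 1 x)
      (stdGaussianPDF_pos x).ne').congr_deriv ?_
    have := (stdGaussianPDF_pos x).ne'
    simp only [id, sub_zero, NNReal.coe_one, div_one]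
    field_simp
    ring
  refine MonotoneOn.convexOn_of_deriv (convex_Ioo 0 1)
    (fun p hp => (hderiv p hp).continuousAt.continuousWithinAt)
    (fun p hp => (hderiv p (interior_subset hp)).differentiableAt.differentiableWithinAt) ?_
  rw [interior_Ioo]
  intro p hp r hr hpr
  rw [(hderiv p hp).deriv, (hderiv r hr).deriv]
  have := hratio (strictMonoOn_gaussQuantile.monotoneOn hp hr hpr)
  gcongr

/-! ### The two-point inequality -/

theorem taylor_two_le_of_le_deriv2 {F F' F'' : ℝ → ℝ} {a b m : ℝ} (hab : a ≤ b)
    (hF : ∀ s ∈ Icc a b, HasDerivAt F (F' s) s) (hF' : ∀ s ∈ Icc a b, HasDerivAt F' (F'' s) s)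
    (hm : ∀ s ∈ Icc a b, m ≤ F'' s) :
    F a + F' a * (b - a) + m / 2 * (b - a) ^ 2 ≤ F b := by
  have hlin : ∀ s, HasDerivAt (fun s => F' a + m * (s - a)) m s := fun s => by
    simpa using (((hasDerivAt_id s).sub_const a).const_mul m).const_add (F' a)
  have hquad : ∀ s, HasDerivAt (fun s => F a + F' a * (s - a) + m / 2 * (s - a) ^ 2)
      (F' a + m * (s - a)) s := fun s => by
    have hid := (hasDerivAt_id s).sub_const a
    refine (((hid.const_mul (F' a)).const_add (F a)).add
      ((hid.pow 2).const_mul (m / 2))).congr_deriv ?_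
    simp only [id, Nat.cast_ofNat, Nat.add_one_sub_one, pow_one]
    ring
  have hbound : ∀ s ∈ Icc a b, F' a + m * (s - a) ≤ F' s :=
    image_le_of_deriv_right_le_deriv_boundary
      (fun s _ => (hlin s).continuousAt.continuousWithinAt) (fun s _ => (hlin s).hasDerivWithinAt)
      (by simp only [sub_self, mul_zero, add_zero, le_refl])
      (fun s hs => (hF' s hs).continuousAt.continuousWithinAt)
      (fun s hs => (hF' s (Ico_subset_Icc_self hs)).hasDerivWithinAt)
      (fun s hs => hm s (Ico_subset_Icc_self hs))
  exact image_le_of_deriv_right_le_deriv_boundary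
    (fun s _ => (hquad s).continuousAt.continuousWithinAt) (fun s _ => (hquad s).hasDerivWithinAt)
    (by simp only [sub_self, mul_zero, add_zero, ne_eq, OfNat.ofNat_ne_zero, not_false_eq_true,
      zero_pow, le_refl])
    (fun s hs => (hF s hs).continuousAt.continuousWithinAt)
    (fun s hs => (hF s (Ico_subset_Icc_self hs)).hasDerivWithinAt)
    (fun s hs => hbound s (Ico_subset_Icc_self hs)) (right_mem_Icc.2 hab)

theorem hasDerivAt_sq_gaussProfile {p : ℝ} (hp : p ∈ Ioo (0 : ℝ) 1) :
    HasDerivAt (fun p => gaussProfile p ^ 2) (-2 * (gaussProfile p * gaussQuantile p)) p := by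
  refine ((hasDerivAt_gaussProfile hp).pow 2).congr_deriv ?_
  simp only [Nat.cast_ofNat, Nat.add_one_sub_one, pow_one]
  ring

theorem hasDerivAt_gaussProfile_mul_gaussQuantile {p : ℝ} (hp : p ∈ Ioo (0 : ℝ) 1) :
    HasDerivAt (fun p => gaussProfile p * gaussQuantile p) (1 - gaussQuantile p ^ 2) p := by
  refine ((hasDerivAt_gaussProfile hp).mul (hasDerivAt_gaussQuantile hp)).congr_deriv ?_
  rw [mul_inv_cancel₀ (gaussProfile_pos p).ne']
  ring

theorem sq_gaussQuantile_le {p r : ℝ} (hp : 0 < p) (hpr : p ≤ r) (hsum : p + r ≤ 1)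
    (hr : r < 1) : gaussQuantile r ^ 2 ≤ gaussQuantile p ^ 2 := by
  have hp' : p ∈ Ioo (0 : ℝ) 1 := ⟨hp, hpr.trans_lt hr⟩
  have hr' : r ∈ Ioo (0 : ℝ) 1 := ⟨hp.trans_le hpr, hr⟩
  have hlower := strictMonoOn_gaussQuantile.monotoneOn hp' hr' hpr
  have hupper := strictMonoOn_gaussQuantile.monotoneOn hr'
    (b := 1 - p) ⟨by linarith [hp'.2], by linarith⟩ (by linarith)
  rw [gaussQuantile_one_sub hp'] at hupper
  nlinarith

theorem gaussProfile_le_gaussProfile {p r : ℝ} (hp : 0 < p) (hpr : p ≤ r) (hsum : p + r ≤ 1)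
    (hr : r < 1) : gaussProfile p ≤ gaussProfile r := by
  have := sq_gaussQuantile_le hp hpr hsum hr
  simp only [gaussProfile, gaussianPDFReal, sub_zero]
  gcongr

section TwoPoint

variable {c x : ℝ}

theorem le_sq_gaussProfile_add_sq_gaussProfile (hx : 0 ≤ x) (h0 : 0 < c - x) (h1 : c + x < 1) :
    2 * gaussProfile c ^ 2 + 2 * gaussQuantile c ^ 2 * x ^ 2
      ≤ gaussProfile (c + x) ^ 2 + gaussProfile (c - x) ^ 2 + 2 * x ^ 2 := by
  have hplus : ∀ s ∈ Icc 0 x, c + s ∈ Ioo (0 : ℝ) 1 := fun s hs =>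
    ⟨by linarith [hs.1], by linarith [hs.2]⟩
  have hminus : ∀ s ∈ Icc 0 x, c - s ∈ Ioo (0 : ℝ) 1 := fun s hs =>
    ⟨by linarith [hs.2], by linarith [hs.1]⟩
  have hconvex : ∀ s ∈ Icc 0 x,
      4 * gaussQuantile c ^ 2 ≤ 2 * gaussQuantile (c + s) ^ 2 + 2 * gaussQuantile (c - s) ^ 2 := by
    intro s hs
    have := convexOn_sq_gaussQuantile.2 (hplus s hs) (hminus s hs) one_half_pos.le one_half_pos.le
      (add_halves (1 : ℝ))
    simp only [smul_eq_mul] at this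
    rw [show 1 / 2 * (c + s) + 1 / 2 * (c - s) = c by ring] at this
    linarith
  have htaylor := taylor_two_le_of_le_deriv2 hx
    (F := fun s => gaussProfile (c + s) ^ 2 + gaussProfile (c - s) ^ 2 + 2 * s ^ 2)
    (F' := fun s => -2 * (gaussProfile (c + s) * gaussQuantile (c + s))
      + 2 * (gaussProfile (c - s) * gaussQuantile (c - s)) + 4 * s)
    (fun s hs => ((((hasDerivAt_sq_gaussProfile (hplus s hs)).comp_const_add c s).add
      ((hasDerivAt_sq_gaussProfile (hminus s hs)).comp_const_sub c s)).add
      ((hasDerivAt_pow 2 s).const_mul 2)).congr_deriv (by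
        simp only [Nat.cast_ofNat, Nat.add_one_sub_one, pow_one]
        ring))
    (fun s hs =>
      (((((hasDerivAt_gaussProfile_mul_gaussQuantile (hplus s hs)).comp_const_add c s).const_mul
        (-2)).add (((hasDerivAt_gaussProfile_mul_gaussQuantile (hminus s hs)).comp_const_sub
        c s).const_mul 2)).add ((hasDerivAt_id s).const_mul 4)).congr_deriv (by ring))
    hconvex
  simp only [add_zero, sub_zero] at htaylor
  linarith

theorem sq_gaussProfile_sub_sq_gaussProfile_le (hx : 0 ≤ x) (h0 : 0 < c - x) (hc : c ≤ 1 / 2) :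
    gaussProfile (c + x) ^ 2 - gaussProfile (c - x) ^ 2
      ≤ -4 * gaussProfile c * gaussQuantile c * x := by
  have hplus : ∀ s ∈ Icc 0 x, c + s ∈ Ioo (0 : ℝ) 1 := fun s hs =>
    ⟨by linarith [hs.1], by linarith [hs.2]⟩
  have hminus : ∀ s ∈ Icc 0 x, c - s ∈ Ioo (0 : ℝ) 1 := fun s hs =>
    ⟨by linarith [hs.2], by linarith [hs.1]⟩
  have htaylor := taylor_two_le_of_le_deriv2 hx (m := 0)
    (F := fun s => gaussProfile (c - s) ^ 2 - gaussProfile (c + s) ^ 2)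
    (F' := fun s => 2 * (gaussProfile (c - s) * gaussQuantile (c - s))
      + 2 * (gaussProfile (c + s) * gaussQuantile (c + s)))
    (fun s hs => (((hasDerivAt_sq_gaussProfile (hminus s hs)).comp_const_sub c s).sub
      ((hasDerivAt_sq_gaussProfile (hplus s hs)).comp_const_add c s)).congr_deriv (by ring))
    (fun s hs =>
      (((hasDerivAt_gaussProfile_mul_gaussQuantile (hminus s hs)).comp_const_sub c s).const_mul
        2).add (((hasDerivAt_gaussProfile_mul_gaussQuantile (hplus s hs)).comp_const_add
        c s).const_mul 2))
    (fun s hs => by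
      have := sq_gaussQuantile_le (p := c - s) (r := c + s) (hminus s hs).1
        (by linarith [hs.1]) (by linarith) (hplus s hs).2
      linarith)
  simp only [add_zero, sub_zero] at htaylor
  linarith

end TwoPoint

theorem two_mul_le_sqrt_add_sqrt {r u w : ℝ} (hu : 0 ≤ u) (hw : 0 ≤ w)
    (h : (u - w) ^ 2 ≤ 8 * r ^ 2 * (u + w - 2 * r ^ 2)) : 2 * r ≤ √u + √w := by
  obtain ⟨α, hα, rfl⟩ : ∃ α, 0 ≤ α ∧ α ^ 2 = u := ⟨√u, Real.sqrt_nonneg u, Real.sq_sqrt hu⟩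
  obtain ⟨β, hβ, rfl⟩ : ∃ β, 0 ≤ β ∧ β ^ 2 = w := ⟨√w, Real.sqrt_nonneg w, Real.sq_sqrt hw⟩
  rw [Real.sqrt_sq hα, Real.sqrt_sq hβ]
  by_contra! hlt
  -- The hypothesis says `((α + β)² - 4r²) * (α - β)² ≤ 4r² * ((α + β)² - 4r²)`.
  have hsum : (α + β) ^ 2 - 4 * r ^ 2 < 0 := by nlinarith
  have hdiff : (α - β) ^ 2 < 4 * r ^ 2 := by nlinarith
  nlinarith

theorem two_mul_gaussProfile_le {c x : ℝ} (hx : 0 ≤ x) (h0 : 0 < c - x) (hc : c ≤ 1 / 2) :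
    2 * gaussProfile c
      ≤ √(gaussProfile (c + x) ^ 2 + x ^ 2) + √(gaussProfile (c - x) ^ 2 + x ^ 2) := by
  have hsum := le_sq_gaussProfile_add_sq_gaussProfile hx h0 (by linarith)
  have hdiff := sq_gaussProfile_sub_sq_gaussProfile_le hx h0 hc
  have hmono : gaussProfile (c - x) ≤ gaussProfile (c + x) :=
    gaussProfile_le_gaussProfile h0 (by linarith) (by linarith) (by linarith)
  have hnonneg : 0 ≤ gaussProfile (c + x) ^ 2 - gaussProfile (c - x) ^ 2 :=
    sub_nonneg.2 (pow_le_pow_left₀ (gaussProfile_pos _).le hmono 2)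
  refine two_mul_le_sqrt_add_sqrt (by positivity) (by positivity) ?_
  calc (gaussProfile (c + x) ^ 2 + x ^ 2 - (gaussProfile (c - x) ^ 2 + x ^ 2)) ^ 2
      = (gaussProfile (c + x) ^ 2 - gaussProfile (c - x) ^ 2) ^ 2 := by ring
    _ ≤ (-4 * gaussProfile c * gaussQuantile c * x) ^ 2 := pow_le_pow_left₀ hnonneg hdiff 2
    _ = 8 * gaussProfile c ^ 2 * (2 * gaussQuantile c ^ 2 * x ^ 2) := by ring
    _ ≤ _ := by
      gcongr
      linarith

theorem gaussProfile_midpoint_le {a b : ℝ} (ha : a ∈ Ioo (0 : ℝ) 1) (hb : b ∈ Ioo (0 : ℝ) 1) :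
    gaussProfile ((a + b) / 2) ≤ (√(gaussProfile a ^ 2 + ((a - b) / 2) ^ 2)
      + √(gaussProfile b ^ 2 + ((a - b) / 2) ^ 2)) / 2 := by
  wlog hba : b ≤ a generalizing a b
  · have := this hb ha (le_of_not_ge hba)
    rwa [add_comm b a, add_comm (√_), ← neg_sub a b, neg_div, neg_sq] at this
  wlog hc : (a + b) / 2 ≤ 1 / 2 generalizing a b
  · have := this (a := 1 - b) (b := 1 - a) ⟨by linarith [hb.2], by linarith [hb.1]⟩
      ⟨by linarith [ha.2], by linarith [ha.1]⟩ (by linarith) (by linarith)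
    rwa [show (1 - b + (1 - a)) / 2 = 1 - (a + b) / 2 by ring, sub_sub_sub_cancel_left,
      gaussProfile_one_sub ha, gaussProfile_one_sub hb, add_comm (√_), gaussProfile_one_sub
        ⟨by linarith [ha.1, hb.1], by linarith [ha.2, hb.2]⟩] at this
  have := two_mul_gaussProfile_le (c := (a + b) / 2) (x := (a - b) / 2) (by linarith)
    (by linarith [hb.1]) hc
  rw [show (a + b) / 2 + (a - b) / 2 = a by ring, show (a + b) / 2 - (a - b) / 2 = b by ring]
    at this
  linarith

/-! ### Random walks -/

theorem integral_mem_Ioo {α : Type*} [MeasurableSpace α] {μ : Measure α} [IsProbabilityMeasure μ]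
    {f : α → ℝ} {a b : ℝ} (hf : Integrable f μ) (hmem : ∀ x, f x ∈ Ioo a b) :
    ∫ x, f x ∂μ ∈ Ioo a b := by
  obtain ⟨x, hx⟩ := exists_le_integral hf
  obtain ⟨y, hy⟩ := exists_integral_le hf
  exact ⟨(hmem x).1.trans_le hx, hy.trans_lt (hmem y).2⟩

theorem sqrt_sq_add_sq_le_integral {α : Type*} [MeasurableSpace α] {μ : Measure α}
    {f g : α → ℝ} (hf : Integrable f μ) (hg : Integrable g μ) {x y : ℝ}
    (hx : |x| ≤ ∫ a, f a ∂μ) (hy : |y| ≤ ∫ a, g a ∂μ) :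
    √(x ^ 2 + y ^ 2) ≤ ∫ a, √(f a ^ 2 + g a ^ 2) ∂μ := by
  have hnorm := norm_integral_le_integral_norm (μ := μ) fun a => (f a + g a * Complex.I : ℂ)
  rw [integral_add hf.ofReal (hg.ofReal.mul_const _), integral_mul_const, integral_complex_ofReal,
    integral_complex_ofReal] at hnorm
  simp only [Complex.norm_add_mul_I] at hnorm
  refine le_trans (Real.sqrt_le_sqrt (add_le_add ?_ ?_)) hnorm
  · exact sq_le_sq.2 (hx.trans (le_abs_self _))
  · exact sq_le_sq.2 (hy.trans (le_abs_self _))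

section Walk

/-- The law of the sum of the vectors of `l` with independent uniform random signs. -/
noncomputable def walkLaw {G : Type*} [AddCommGroup G] [MeasurableSpace G] : List G → Measure G
  | [] => Measure.dirac 0
  | v :: l => (2⁻¹ : ENNReal) • ((walkLaw l).map (· + v) + (walkLaw l).map (· - v))

variable {G : Type*} [AddCommGroup G] [MeasurableSpace G] [MeasurableAdd G]

instance isProbabilityMeasure_walkLaw (l : List G) : IsProbabilityMeasure (walkLaw l) := by
  induction l with
  | nil => exact Measure.dirac.isProbabilityMeasure
  | cons v l ih =>
    have hadd := Measure.isProbabilityMeasure_map (μ := walkLaw l)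
      (measurable_add_const v).aemeasurable
    have hsub := Measure.isProbabilityMeasure_map (μ := walkLaw l)
      (measurableEmbedding_subRight v).measurable.aemeasurable
    refine ⟨?_⟩
    simp only [walkLaw, Measure.smul_apply, Measure.add_apply, measure_univ, smul_eq_mul]
    rw [one_add_one_eq_two, ENNReal.inv_mul_cancel two_ne_zero ENNReal.ofNat_ne_top]

variable [MeasurableSingletonClass G] {F : Type*} [NormedAddCommGroup F]

theorem integrable_walkLaw (l : List G) (f : G → F) : Integrable f (walkLaw l) := by
  induction l generalizing f with
  | nil => exact integrable_dirac enorm_lt_top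
  | cons v l ih =>
    refine (Integrable.add_measure ?_ ?_).smul_measure (by simp)
    · exact (measurableEmbedding_addRight v).integrable_map_iff.2 (ih _)
    · exact (measurableEmbedding_subRight v).integrable_map_iff.2 (ih _)

theorem integral_walkLaw_cons [NormedSpace ℝ F] (v : G) (l : List G) (f : G → F) :
    ∫ y, f y ∂walkLaw (v :: l)
      = (2⁻¹ : ℝ) • (∫ y, f (y + v) ∂walkLaw l + ∫ y, f (y - v) ∂walkLaw l) := by
  have hadd := measurableEmbedding_addRight v
  have hsub := measurableEmbedding_subRight v
  rw [walkLaw, integral_smul_measure, integral_add_measure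
    (hadd.integrable_map_iff.2 (integrable_walkLaw l _))
    (hsub.integrable_map_iff.2 (integrable_walkLaw l _)), hadd.integral_map, hsub.integral_map,
    ENNReal.toReal_inv, ENNReal.toReal_ofNat]

theorem abs_integral_walkLaw_sub_le {l : List G} {f g b : G → ℝ}
    (h : ∀ y, |f y - g y| / 2 ≤ b y) :
    |(∫ y, f y ∂walkLaw l - ∫ y, g y ∂walkLaw l) / 2| ≤ ∫ y, b y ∂walkLaw l := by
  rw [← integral_sub (integrable_walkLaw l f) (integrable_walkLaw l g), ← integral_div]
  refine (abs_integral_le_integral_abs).trans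
    (integral_mono (integrable_walkLaw l _) (integrable_walkLaw l _) fun y => ?_)
  simpa only [abs_div, Nat.abs_ofNat] using h y

theorem gaussProfile_integral_walkLaw_le (l : List G) {f : G → ℝ} {b : G → G → ℝ}
    (hf : ∀ y, f y ∈ Ioo (0 : ℝ) 1)
    (hb : ∀ v ∈ l, ∀ y, |f (y + v) - f (y - v)| / 2 ≤ min (b v (y + v)) (b v (y - v))) :
    gaussProfile (∫ y, f y ∂walkLaw l)
      ≤ ∫ y, √(gaussProfile (f y) ^ 2 + (l.map fun v => b v y ^ 2).sum) ∂walkLaw l := by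
  induction l generalizing f b with
  | nil =>
    simp only [walkLaw, integral_dirac, List.map_nil, List.sum_nil, add_zero]
    rw [Real.sqrt_sq (gaussProfile_pos _).le]
  | cons v l ih =>
    set R : G → ℝ := fun y => √(gaussProfile (f y) ^ 2 + (l.map fun w => b w y ^ 2).sum) with hR
    have hsplit : ∀ y, √(gaussProfile (f y) ^ 2 + ((v :: l).map fun w => b w y ^ 2).sum)
        = √(R y ^ 2 + b v y ^ 2) := fun y => by
      have hsum : 0 ≤ (l.map fun w => b w y ^ 2).sum :=
        List.sum_nonneg (List.forall_mem_map.2 fun w _ => sq_nonneg _)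
      rw [hR, Real.sq_sqrt (by positivity), List.map_cons, List.sum_cons, add_comm (b v y ^ 2),
        add_assoc]
    have hshift : ∀ w, |gaussProfile (∫ y, f (y + w) ∂walkLaw l)| ≤ ∫ y, R (y + w) ∂walkLaw l := by
      intro w
      rw [abs_of_pos (gaussProfile_pos _)]
      refine ih (f := fun y => f (y + w)) (b := fun u y => b u (y + w)) (fun y => hf _) ?_
      intro u hu y
      simpa only [add_right_comm, sub_add_eq_add_sub] using hb u (List.mem_cons_of_mem v hu) (y + w)
    have hmem : ∀ w, ∫ y, f (y + w) ∂walkLaw l ∈ Ioo (0 : ℝ) 1 := fun w =>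
      integral_mem_Ioo (integrable_walkLaw l _) fun y => hf _
    have hstep := fun y => le_min_iff.1 (hb v List.mem_cons_self y)
    simp only [hsplit, integral_walkLaw_cons, smul_eq_mul, sub_eq_add_neg _ v] at hstep ⊢
    rw [← div_eq_inv_mul, ← div_eq_inv_mul]
    refine (gaussProfile_midpoint_le (hmem v) (hmem (-v))).trans ?_
    gcongr ?_ / 2
    refine add_le_add ?_ ?_
    · exact sqrt_sq_add_sq_le_integral (integrable_walkLaw l _) (integrable_walkLaw l _)
        (hshift v) (abs_integral_walkLaw_sub_le fun y => (hstep y).1)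
    · exact sqrt_sq_add_sq_le_integral (integrable_walkLaw l _) (integrable_walkLaw l _)
        (hshift (-v)) (abs_integral_walkLaw_sub_le fun y => (hstep y).2)

end Walk

/-! ### Central limit theorem -/

section GaussianSteps

variable {E : Type*} [NormedAddCommGroup E] [InnerProductSpace ℝ E] {ι : Type*} [Fintype ι]

/-- The steps of a random walk approximating the standard Gaussian measure: `N` copies of
`b i / √N` for every vector `b i` of an orthonormal basis. -/
noncomputable def gaussianSteps (b : OrthonormalBasis ι ℝ E) (N : ℕ) : List E :=
  Finset.univ.toList.flatMap fun i => List.replicate N ((√N)⁻¹ • b i)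

theorem prod_map_gaussianSteps {M : Type*} [CommMonoid M] (b : OrthonormalBasis ι ℝ E) (N : ℕ)
    (g : E → M) : ((gaussianSteps b N).map g).prod = ∏ i, g ((√N)⁻¹ • b i) ^ N := by
  rw [gaussianSteps, List.map_flatMap, List.flatMap_def, List.prod_flatten, List.map_map]
  simp [Function.comp_def]

theorem sum_map_gaussianSteps {M : Type*} [AddCommMonoid M] (b : OrthonormalBasis ι ℝ E) (N : ℕ)
    (g : E → M) : ((gaussianSteps b N).map g).sum = ∑ i, N • g ((√N)⁻¹ • b i) := by
  rw [gaussianSteps, List.map_flatMap, List.flatMap_def, List.sum_flatten, List.map_map]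
  simp [Function.comp_def]

end GaussianSteps

section CentralLimit

variable {E : Type*} [NormedAddCommGroup E] [InnerProductSpace ℝ E] [MeasurableSpace E]
  [BorelSpace E]

theorem charFun_walkLaw (l : List E) (t : E) :
    charFun (walkLaw l) t = (l.map fun v => (Real.cos ⟪v, t⟫ : ℂ)).prod := by
  induction l with
  | nil => simp only [walkLaw, charFun_dirac, inner_zero_left, Complex.ofReal_zero, zero_mul,
      Complex.exp_zero, List.map_nil, List.prod_nil]
  | cons v l ih =>
    have hcos : (Real.cos ⟪v, t⟫ : ℂ)
        = (Complex.exp (⟪v, t⟫ * Complex.I) + Complex.exp (-⟪v, t⟫ * Complex.I)) / 2 := by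
      rw [Complex.ofReal_cos, Complex.cos]
    rw [List.map_cons, List.prod_cons, ← ih, hcos, charFun_apply, integral_walkLaw_cons,
      charFun_apply]
    simp only [sub_eq_add_neg, inner_add_left, inner_neg_left, Complex.ofReal_add,
      Complex.ofReal_neg, add_mul, Complex.exp_add, integral_mul_const, Complex.real_smul,
      Complex.ofReal_inv, Complex.ofReal_ofNat]
    ring

theorem tendsto_cos_inv_sqrt_mul_pow (t : ℝ) :
    Tendsto (fun N : ℕ => (Real.cos ((√N)⁻¹ * t) : ℂ) ^ N) atTop
      (𝓝 (Complex.exp (-t ^ 2 / 2))) := by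
  have hmean : ∫ x, id x ∂walkLaw [(1 : ℝ)] = 0 := by
    rw [integral_walkLaw_cons]
    simp [walkLaw]
  have hvar : ∫ x, ((id : ℝ → ℝ) ^ 2) x ∂walkLaw [(1 : ℝ)] = 1 := by
    rw [integral_walkLaw_cons]
    norm_num [walkLaw]
  have := ProbabilityTheory.tendsto_charFun_inv_sqrt_mul_pow aemeasurable_id hmean hvar t
  simpa [charFun_walkLaw] using this

variable [FiniteDimensional ℝ E] {ι : Type*} [Fintype ι]

theorem tendsto_integral_walkLaw_gaussianSteps (b : OrthonormalBasis ι ℝ E) {f : E → ℝ}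
    (hf : Continuous f) {C : ℝ} (hC : ∀ x, ‖f x‖ ≤ C) :
    Tendsto (fun N => ∫ x, f x ∂walkLaw (gaussianSteps b N)) atTop (𝓝 (∫ x, f x ∂γ E)) := by
  let walk : ℕ → ProbabilityMeasure E := fun N => ⟨walkLaw (gaussianSteps b N), inferInstance⟩
  have hweak : Tendsto walk atTop (𝓝 ⟨γ E, inferInstance⟩) := by
    refine ProbabilityMeasure.tendsto_of_tendsto_charFun fun t => ?_
    have hwalk : ∀ N, charFun (walk N : Measure E) t
        = ∏ i, (Real.cos ((√N)⁻¹ * ⟪b i, t⟫) : ℂ) ^ N := fun N => by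
      simp only [walk, ProbabilityMeasure.coe_mk, charFun_walkLaw, prod_map_gaussianSteps,
        real_inner_smul_left]
    have hgauss : charFun (γ E) t = ∏ i, Complex.exp (-(⟪b i, t⟫ : ℂ) ^ 2 / 2) := by
      rw [ProbabilityTheory.charFun_stdGaussian, ← Complex.exp_sum, ← Finset.sum_div,
        Finset.sum_neg_distrib, ← Complex.ofReal_pow, ← b.sum_sq_inner_right]
      push_cast
      rfl
    simp only [hwalk, ProbabilityMeasure.coe_mk, hgauss]
    exact tendsto_finsetProd _ fun i _ => tendsto_cos_inv_sqrt_mul_pow _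
  exact ProbabilityMeasure.tendsto_iff_forall_integral_tendsto.1 hweak
    (BoundedContinuousFunction.ofNormedAddCommGroup f hf C hC)

end CentralLimit

/-! ### The Bobkov inequality -/

theorem sqrt_sq_add_sum_sq_le {ι : Type*} (s : Finset ι) (a : ℝ) (x : ι → ℝ) {ω : ℝ}
    (hω : 0 ≤ ω) :
    √(a ^ 2 + ∑ i ∈ s, (|x i| + ω) ^ 2) ≤ √(a ^ 2 + ∑ i ∈ s, x i ^ 2) + s.card * ω := by
  set S := √(a ^ 2 + ∑ i ∈ s, x i ^ 2) with hS
  have hS2 : S ^ 2 = a ^ 2 + ∑ i ∈ s, x i ^ 2 := Real.sq_sqrt (by positivity)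
  have hle : ∀ i ∈ s, |x i| ≤ S := fun i hi => by
    refine Real.abs_le_sqrt (le_add_of_nonneg_of_le (sq_nonneg a) ?_)
    exact Finset.single_le_sum (f := fun i => x i ^ 2) (fun j _ => sq_nonneg _) hi
  have hcard : (s.card : ℝ) ≤ (s.card : ℝ) ^ 2 := by exact_mod_cast Nat.le_self_pow two_ne_zero _
  refine Real.sqrt_le_iff.2 ⟨by positivity, ?_⟩
  calc a ^ 2 + ∑ i ∈ s, (|x i| + ω) ^ 2
      = S ^ 2 + (2 * ω * ∑ i ∈ s, |x i| + s.card * ω ^ 2) := by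
        simp only [hS2, add_sq, sq_abs, Finset.sum_add_distrib, Finset.sum_const, nsmul_eq_mul,
          ← Finset.sum_mul, ← Finset.mul_sum]
        ring
    _ ≤ S ^ 2 + (2 * ω * (s.card * S) + s.card ^ 2 * ω ^ 2) := by
        gcongr
        simpa only [nsmul_eq_mul] using Finset.sum_le_card_nsmul s _ S hle
    _ = (S + s.card * ω) ^ 2 := by ring

theorem abs_sub_div_two_le_of_fderiv_near {E : Type*} [NormedAddCommGroup E] [NormedSpace ℝ E]
    {f : E → ℝ} {f' : E → StrongDual ℝ E} {ω δ : ℝ} (hf' : ∀ x, HasFDerivAt f (f' x) x)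
    (hδ : ∀ ⦃x y⦄, dist x y < δ → dist (f' x) (f' y) < ω) {x v : E} (hv : 2 * ‖v‖ < δ) :
    |f (x + v) - f (x - v)| / 2 ≤ min (|f' (x + v) v| + ω * ‖v‖) (|f' (x - v) v| + ω * ‖v‖) := by
  have hdouble : x + v - (x - v) = (2 : ℝ) • v := by rw [two_smul]; abel
  have hball : segment ℝ (x - v) (x + v) ⊆ Metric.closedBall x ‖v‖ :=
    (convex_closedBall x ‖v‖).segment_subset (by simp) (by simp)
  have hbound : ∀ z ∈ segment ℝ (x - v) (x + v),
      |f (x + v) - f (x - v)| / 2 ≤ |f' z v| + ω * ‖v‖ := fun z hz => by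
    have hnear : ∀ w ∈ segment ℝ (x - v) (x + v), ‖f' w - f' z‖ ≤ ω := fun w hw => by
      rw [← dist_eq_norm]
      refine (hδ ?_).le
      linarith [dist_triangle_right w z x, Metric.mem_closedBall.1 (hball hw),
        Metric.mem_closedBall.1 (hball hz)]
    have hmean : ‖f (x + v) - f (x - v) - f' z (x + v - (x - v))‖ ≤ ω * ‖x + v - (x - v)‖ :=
      (convex_segment _ _).norm_image_sub_le_of_norm_hasFDerivWithin_le'
        (fun w _ => (hf' w).hasFDerivWithinAt) hnear (left_mem_segment ℝ _ _)
        (right_mem_segment ℝ _ _)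
    rw [hdouble, norm_smul, Real.norm_ofNat, map_smul, smul_eq_mul, Real.norm_eq_abs] at hmean
    have htri := abs_sub_abs_le_abs_sub (f (x + v) - f (x - v)) (2 * f' z v)
    rw [abs_mul, Nat.abs_ofNat] at htri
    linarith
  exact le_min (hbound _ (right_mem_segment ℝ _ _)) (hbound _ (left_mem_segment ℝ _ _))

section Bobkov

variable {E : Type*} [NormedAddCommGroup E] [InnerProductSpace ℝ E] [FiniteDimensional ℝ E]
  [MeasurableSpace E] [BorelSpace E] {f : E → ℝ} {f' : E → StrongDual ℝ E}

theorem eventually_gaussProfile_integral_walkLaw_le {ι : Type*} [Fintype ι]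
    (b : OrthonormalBasis ι ℝ E)
    (hf : ∀ x, f x ∈ Ioo (0 : ℝ) 1) (hf' : ∀ x, HasFDerivAt f (f' x) x)
    (huc : UniformContinuous f') {ω : ℝ} (hω : 0 < ω) :
    ∀ᶠ N in atTop, gaussProfile (∫ x, f x ∂walkLaw (gaussianSteps b N))
      ≤ ∫ x, (√(gaussProfile (f x) ^ 2 + ‖f' x‖ ^ 2) + Fintype.card ι * ω)
        ∂walkLaw (gaussianSteps b N) := by
  obtain ⟨δ, hδ0, hδ⟩ := Metric.uniformContinuous_iff.1 huc ω hω
  have hsmall : ∀ᶠ N : ℕ in atTop, 2 * (√N)⁻¹ < δ := by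
    have : Tendsto (fun N : ℕ => 2 * (√N)⁻¹) atTop (𝓝 (2 * 0)) :=
      (tendsto_inv_atTop_zero.comp (Real.tendsto_sqrt_atTop.comp
        tendsto_natCast_atTop_atTop)).const_mul 2
    exact this.eventually_lt_const (by simpa using hδ0)
  filter_upwards [hsmall, eventually_gt_atTop 0] with N hN hN0
  have hnorm : ∀ v ∈ gaussianSteps b N, ‖v‖ = (√N)⁻¹ := fun v hv => by
    obtain ⟨i, -, hi⟩ := List.mem_flatMap.1 hv
    rw [List.eq_of_mem_replicate hi, norm_smul, b.norm_eq_one, mul_one, norm_inv,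
      Real.norm_of_nonneg (Real.sqrt_nonneg _)]
  refine (gaussProfile_integral_walkLaw_le (gaussianSteps b N)
    (b := fun v y => |f' y v| + ω * ‖v‖) hf fun v hv y =>
      abs_sub_div_two_le_of_fderiv_near hf' hδ (hnorm v hv ▸ hN)).trans ?_
  refine integral_mono (integrable_walkLaw _ _) (integrable_walkLaw _ _) fun y => ?_
  have hN' : (0 : ℝ) < N := Nat.cast_pos.2 hN0
  have hsum : ((gaussianSteps b N).map fun v => (|f' y v| + ω * ‖v‖) ^ 2).sum
      = ∑ i, (|f' y (b i)| + ω) ^ 2 := by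
    rw [sum_map_gaussianSteps]
    refine Finset.sum_congr rfl fun i _ => ?_
    rw [map_smul, smul_eq_mul, abs_mul, norm_smul, b.norm_eq_one, Real.norm_eq_abs,
      abs_of_pos (by positivity), mul_one, mul_comm ω, ← mul_add, mul_pow, inv_pow,
      Real.sq_sqrt hN'.le, nsmul_eq_mul, mul_inv_cancel_left₀ hN'.ne']
  simp only [hsum, b.norm_dual]
  exact sqrt_sq_add_sum_sq_le Finset.univ _ _ hω.le

theorem gaussProfile_integral_stdGaussian_le_add (hf : ∀ x, f x ∈ Ioo (0 : ℝ) 1)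
    (hf' : ∀ x, HasFDerivAt f (f' x) x) (huc : UniformContinuous f') {M : ℝ}
    (hM : ∀ x, ‖f' x‖ ≤ M) {ω : ℝ} (hω : 0 < ω) :
    gaussProfile (∫ x, f x ∂γ E)
      ≤ ∫ x, √(gaussProfile (f x) ^ 2 + ‖f' x‖ ^ 2) ∂γ E + Module.finrank ℝ E * ω := by
  have hcont : Continuous f := continuous_iff_continuousAt.2 fun x => (hf' x).continuousAt
  have hbound : ∀ x, ‖f x‖ ≤ 1 := fun x => by
    rw [Real.norm_of_nonneg (hf x).1.le]
    exact (hf x).2.le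
  have hmem : ∫ x, f x ∂γ E ∈ Ioo (0 : ℝ) 1 :=
    integral_mem_Ioo (.of_bound hcont.aestronglyMeasurable 1 (.of_forall hbound)) hf
  have hroot_cont : Continuous fun x => √(gaussProfile (f x) ^ 2 + ‖f' x‖ ^ 2) :=
    (((continuousOn_gaussProfile.comp_continuous hcont hf).pow 2).add
      (huc.continuous.norm.pow 2)).sqrt
  have hroot_bound : ∀ x, ‖√(gaussProfile (f x) ^ 2 + ‖f' x‖ ^ 2)‖ ≤ √(1 ^ 2 + M ^ 2) := fun x => by
    rw [Real.norm_of_nonneg (Real.sqrt_nonneg _)]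
    have := gaussProfile_pos (f x)
    have := gaussProfile_le_one (f x)
    have := hM x
    gcongr
  let b := stdOrthonormalBasis ℝ E
  have hlhs := (hasDerivAt_gaussProfile hmem).continuousAt.tendsto.comp
    (tendsto_integral_walkLaw_gaussianSteps b hcont hbound)
  have hrhs := (tendsto_integral_walkLaw_gaussianSteps b hroot_cont hroot_bound).add_const
    (Module.finrank ℝ E * ω)
  refine le_of_tendsto_of_tendsto hlhs hrhs ?_
  filter_upwards [eventually_gaussProfile_integral_walkLaw_le b hf hf' huc hω] with N hN
  rw [integral_add (integrable_walkLaw _ _) (integrable_walkLaw _ _)] at hN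
  simpa using hN

theorem gaussProfile_integral_stdGaussian_le (hf : ∀ x, f x ∈ Ioo (0 : ℝ) 1)
    (hf' : ∀ x, HasFDerivAt f (f' x) x) (huc : UniformContinuous f') {M : ℝ}
    (hM : ∀ x, ‖f' x‖ ≤ M) :
    gaussProfile (∫ x, f x ∂γ E) ≤ ∫ x, √(gaussProfile (f x) ^ 2 + ‖f' x‖ ^ 2) ∂γ E := by
  have hlim : Tendsto (fun ω : ℝ => ∫ x, √(gaussProfile (f x) ^ 2 + ‖f' x‖ ^ 2) ∂γ E
      + Module.finrank ℝ E * ω) (𝓝[>] 0)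
      (𝓝 (∫ x, √(gaussProfile (f x) ^ 2 + ‖f' x‖ ^ 2) ∂γ E + Module.finrank ℝ E * 0)) :=
    ((continuous_const.add (continuous_const.mul continuous_id)).tendsto 0).mono_left
      nhdsWithin_le_nhds
  rw [mul_zero, add_zero] at hlim
  exact ge_of_tendsto hlim (eventually_mem_nhdsWithin.mono fun ω hω =>
    gaussProfile_integral_stdGaussian_le_add hf hf' huc hM hω)

end Bobkov

/-! ### Growth of `Φ⁻¹(∫ Φ(t - g) dγ)` -/

theorem lipschitzWith_stdGaussianPDF : LipschitzWith 1 φ := by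
  refine lipschitzWith_of_nnnorm_deriv_le
    (fun x => (hasDerivAt_gaussianPDFReal 0 1 x).differentiableAt) fun x => ?_
  have hexp : |x| * Real.exp (-x ^ 2 / 2) ≤ 1 := by
    rw [neg_div, Real.exp_neg, ← div_eq_mul_inv, div_le_one (Real.exp_pos _)]
    nlinarith [Real.add_one_le_exp (x ^ 2 / 2), sq_abs x, sq_nonneg (|x| - 1)]
  rw [← NNReal.coe_le_coe, coe_nnnorm, (hasDerivAt_gaussianPDFReal 0 1 x).deriv, norm_mul,
    Real.norm_of_nonneg (stdGaussianPDF_pos x).le, gaussianPDFReal]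
  simp only [sub_zero, NNReal.coe_one, div_one, norm_neg, Real.norm_eq_abs, mul_one]
  calc |x| * ((√(2 * Real.pi))⁻¹ * Real.exp (-x ^ 2 / 2))
      = (√(2 * Real.pi))⁻¹ * (|x| * Real.exp (-x ^ 2 / 2)) := by ring
    _ ≤ 1 := mul_le_one₀ inv_sqrt_two_pi_le_one (by positivity) hexp

theorem uniformContinuous_smul_of_norm_le {X 𝕜 V : Type*} [UniformSpace X] [NormedField 𝕜]
    [SeminormedAddCommGroup V] [NormedSpace 𝕜 V] {c : X → 𝕜} {F : X → V} {C M : ℝ}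
    (hc : UniformContinuous c) (hF : UniformContinuous F) (hC : ∀ x, ‖c x‖ ≤ C)
    (hM : ∀ x, ‖F x‖ ≤ M) : UniformContinuous fun x => c x • F x := by
  rw [UniformContinuous, tendsto_uniformity_iff_dist_tendsto_zero] at hc hF ⊢
  refine squeeze_zero (fun _ => dist_nonneg) (fun p => ?_)
    (by simpa using (hF.const_mul C).add (hc.mul_const M))
  calc dist (c p.1 • F p.1) (c p.2 • F p.2)
      ≤ dist (c p.1 • F p.1) (c p.1 • F p.2) + dist (c p.1 • F p.2) (c p.2 • F p.2) :=
        dist_triangle _ _ _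
    _ ≤ C * dist (F p.1) (F p.2) + dist (c p.1) (c p.2) * M := by
        rw [dist_smul₀, dist_eq_norm (_ • _), ← sub_smul, norm_smul, ← dist_eq_norm]
        gcongr
        exacts [hC _, hM _]

section ShiftedCDF

variable {Ω : Type*} [MeasurableSpace Ω] {μ : Measure Ω} {h : Ω → ℝ}

theorem integrable_gaussCDF_sub [IsFiniteMeasure μ] (hh : AEStronglyMeasurable h μ) (t : ℝ) :
    Integrable (fun x => gaussCDF (t - h x)) μ :=
  .of_bound (continuous_gaussCDF.comp_aestronglyMeasurable
    (aestronglyMeasurable_const.sub hh)) 1 <| .of_forall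
    fun _ => norm_gaussCDF_le_one _

theorem integral_gaussCDF_sub_mem_Ioo [IsProbabilityMeasure μ] (hh : AEStronglyMeasurable h μ)
    (t : ℝ) : ∫ x, gaussCDF (t - h x) ∂μ ∈ Ioo (0 : ℝ) 1 :=
  integral_mem_Ioo (integrable_gaussCDF_sub hh t) fun _ => gaussCDF_mem_Ioo _

theorem hasDerivAt_integral_gaussCDF_sub [IsFiniteMeasure μ] (hh : AEStronglyMeasurable h μ)
    (t : ℝ) :
    HasDerivAt (fun s => ∫ x, gaussCDF (s - h x) ∂μ) (∫ x, φ (t - h x) ∂μ) t :=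
  (hasDerivAt_integral_of_dominated_loc_of_deriv_le (bound := fun _ => 1)
    (F' := fun s x => φ (s - h x)) univ_mem
    (.of_forall fun s => (integrable_gaussCDF_sub hh s).aestronglyMeasurable)
    (integrable_gaussCDF_sub hh t)
    ((continuous_gaussianPDFReal 0 1).comp_aestronglyMeasurable
      (aestronglyMeasurable_const.sub hh))
    (.of_forall fun _ _ _ => norm_stdGaussianPDF_le_one _) (integrable_const 1)
    (.of_forall fun x s _ => (hasDerivAt_gaussCDF _).comp_sub_const s (h x))).2

end ShiftedCDF

section Growth

variable {E : Type*} [NormedAddCommGroup E] [InnerProductSpace ℝ E] [FiniteDimensional ℝ E]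
  [MeasurableSpace E] [BorelSpace E] {h : E → ℝ} {h' : E → StrongDual ℝ E} {L : ℝ}

theorem sqrt_sq_gaussProfile_add_sq_norm_smul_le {V : Type*} [SeminormedAddCommGroup V]
    [NormedSpace ℝ V] {v : V} {L : ℝ} (hv : ‖v‖ ≤ L) (t : ℝ) :
    √(gaussProfile (gaussCDF t) ^ 2 + ‖-φ t • v‖ ^ 2) ≤ √(1 + L ^ 2) * φ t := by
  refine Real.sqrt_le_iff.2 ⟨mul_nonneg (Real.sqrt_nonneg _) (stdGaussianPDF_pos t).le, ?_⟩
  calc gaussProfile (gaussCDF t) ^ 2 + ‖-φ t • v‖ ^ 2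
      = (1 + ‖v‖ ^ 2) * φ t ^ 2 := by
        rw [gaussProfile_gaussCDF, norm_smul, norm_neg, Real.norm_eq_abs, mul_pow, sq_abs]
        ring
    _ ≤ (1 + L ^ 2) * φ t ^ 2 := by gcongr
    _ = (√(1 + L ^ 2) * φ t) ^ 2 := by
        rw [mul_pow, Real.sq_sqrt (by positivity)]

theorem gaussProfile_integral_gaussCDF_sub_le (hh : ∀ x, HasFDerivAt h (h' x) x)
    (huc : UniformContinuous h') (hL : ∀ x, ‖h' x‖ ≤ L) (t : ℝ) :
    gaussProfile (∫ x, gaussCDF (t - h x) ∂γ E) ≤ √(1 + L ^ 2) * ∫ x, φ (t - h x) ∂γ E := by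
  have hderiv : ∀ x, HasFDerivAt (fun y => gaussCDF (t - h y)) (-φ (t - h x) • h' x) x := fun x =>
    ((hasDerivAt_gaussCDF _).comp_const_sub t (h x)).comp_hasFDerivAt x (hh x)
  have hpdf : ∀ x, ‖φ (t - h x)‖ ≤ 1 := fun x => norm_stdGaussianPDF_le_one _
  have hpdf_neg : ∀ x, ‖-φ (t - h x)‖ ≤ 1 := fun x => (norm_neg _).trans_le (hpdf x)
  have hderiv_bound : ∀ x, ‖-φ (t - h x) • h' x‖ ≤ L := fun x => by
    rw [norm_smul]
    exact (mul_le_of_le_one_left (norm_nonneg _) (hpdf_neg x)).trans (hL x)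
  have hLip : LipschitzWith L.toNNReal h :=
    lipschitzWith_of_nnnorm_fderiv_le (𝕜 := ℝ) (fun x => (hh x).differentiableAt) fun x =>
      (hh x).fderiv ▸ NNReal.le_toNNReal_of_coe_le (hL x)
  have hpdf_uc : UniformContinuous fun x => φ (t - h x) :=
    lipschitzWith_stdGaussianPDF.uniformContinuous.comp
      (uniformContinuous_const.sub hLip.uniformContinuous)
  have hderiv_uc : UniformContinuous fun x => -φ (t - h x) • h' x :=
    uniformContinuous_smul_of_norm_le hpdf_uc.neg huc hpdf_neg hL
  have hpdf_int : Integrable (fun x => φ (t - h x)) (γ E) :=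
    .of_bound hpdf_uc.continuous.aestronglyMeasurable 1 (.of_forall hpdf)
  calc gaussProfile (∫ x, gaussCDF (t - h x) ∂γ E)
      ≤ ∫ x, √(gaussProfile (gaussCDF (t - h x)) ^ 2 + ‖-φ (t - h x) • h' x‖ ^ 2) ∂γ E :=
        gaussProfile_integral_stdGaussian_le (fun x => gaussCDF_mem_Ioo _) hderiv hderiv_uc
          hderiv_bound
    _ ≤ ∫ x, √(1 + L ^ 2) * φ (t - h x) ∂γ E :=
        integral_mono_of_nonneg (.of_forall fun x => Real.sqrt_nonneg _) (hpdf_int.const_mul _)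
          (.of_forall fun x => sqrt_sq_gaussProfile_add_sq_norm_smul_le (hL x) _)
    _ = √(1 + L ^ 2) * ∫ x, φ (t - h x) ∂γ E := integral_const_mul _ _

theorem monotone_gaussQuantile_integral_sub_of_hasFDerivAt (hh : ∀ x, HasFDerivAt h (h' x) x)
    (huc : UniformContinuous h') (hL : ∀ x, ‖h' x‖ ≤ L) :
    Monotone fun t => gaussQuantile (∫ x, gaussCDF (t - h x) ∂γ E) - t / √(1 + L ^ 2) := by
  have hmeas : AEStronglyMeasurable h (γ E) :=
    (continuous_iff_continuousAt.2 fun x => (hh x).continuousAt).aestronglyMeasurable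
  refine monotone_of_hasDerivAt_nonneg (fun t =>
    ((hasDerivAt_gaussQuantile (integral_gaussCDF_sub_mem_Ioo hmeas t)).comp t
      (hasDerivAt_integral_gaussCDF_sub hmeas t)).sub ((hasDerivAt_id t).div_const _)) fun t => ?_
  have hroot : 0 < √(1 + L ^ 2) := Real.sqrt_pos.2 (by positivity)
  rw [Pi.zero_apply, sub_nonneg, inv_mul_eq_div, div_le_div_iff₀ hroot (gaussProfile_pos _),
    one_mul, mul_comm]
  exact gaussProfile_integral_gaussCDF_sub_le hh huc hL t

end Growth

section Mollification

open scoped Convolution ContDiff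

theorem lipschitzWith_convolution {𝕜 G V W F : Type*} [NontriviallyNormedField 𝕜]
    [SeminormedAddCommGroup G] [MeasurableSpace G] [NormedAddCommGroup V] [NormedSpace 𝕜 V]
    [NormedAddCommGroup W] [NormedSpace 𝕜 W] [NormedAddCommGroup F] [NormedSpace ℝ F]
    [NormedSpace 𝕜 F] {B : V →L[𝕜] W →L[𝕜] F} {μ : Measure G} {k : G → V} {g : G → W} {K : ℝ≥0}
    (hk : Integrable k μ) (hg : LipschitzWith K g) (hkg : ConvolutionExists k g B μ) :
    LipschitzWith (‖B‖₊ * (∫ x, ‖k x‖ ∂μ).toNNReal * K) (k ⋆[B, μ] g) := by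
  refine LipschitzWith.of_dist_le_mul fun x y => ?_
  rw [dist_eq_norm, convolution, convolution, ← integral_sub (hkg x) (hkg y)]
  push_cast
  rw [Real.coe_toNNReal _ (integral_nonneg fun _ => norm_nonneg _)]
  calc ‖∫ t, (B (k t) (g (x - t)) - B (k t) (g (y - t))) ∂μ‖
      ≤ ∫ t, ‖k t‖ * (‖B‖ * (K * dist x y)) ∂μ := by
        refine norm_integral_le_of_norm_le (hk.norm.mul_const _) (.of_forall fun t => ?_)
        rw [← map_sub]
        refine (B.le_opNorm₂ _ _).trans ?_
        rw [mul_comm ‖B‖, mul_assoc, ← dist_eq_norm, ← dist_sub_right x y t]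
        gcongr
        exact hg.dist_le_mul _ _
    _ = ‖B‖ * (∫ t, ‖k t‖ ∂μ) * K * dist x y := by
        rw [integral_mul_const]
        ring

theorem exists_hasFDerivAt_near_of_lipschitzWith {E : Type*} [NormedAddCommGroup E]
    [NormedSpace ℝ E] [FiniteDimensional ℝ E] {g : E → ℝ} {K : ℝ≥0}
    (hg : LipschitzWith K g) {η : ℝ} (hη : 0 < η) :
    ∃ (h : E → ℝ) (h' : E → StrongDual ℝ E), (∀ x, HasFDerivAt h (h' x) x) ∧
      UniformContinuous h' ∧ (∀ x, ‖h' x‖ ≤ K) ∧ ∀ x, dist (h x) (g x) ≤ K * η := by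
  borelize E
  let μ : Measure E := Measure.addHaar
  let ψ : ContDiffBump (0 : E) := ⟨η / 2, η, half_pos hη, half_lt_self hη⟩
  have hψ : ContDiff ℝ 1 (ψ.normed μ) := ψ.contDiff_normed
  have hψ_supp : HasCompactSupport (ψ.normed μ) := ψ.hasCompactSupport_normed
  have hg_int : LocallyIntegrable g μ := hg.continuous.locallyIntegrable
  have hh := hψ_supp.hasFDerivAt_convolution_left (ContinuousLinearMap.lsmul ℝ ℝ) hψ hg_int
  have hψ' : Continuous (fderiv ℝ (ψ.normed μ)) := hψ.continuous_fderiv one_ne_zero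
  have hψ'_supp : HasCompactSupport (fderiv ℝ (ψ.normed μ)) := hψ_supp.fderiv ℝ
  have hψ_norm : ∫ x, ‖ψ.normed μ x‖ ∂μ = 1 := by
    simp only [Real.norm_of_nonneg (ψ.nonneg_normed _), ψ.integral_normed]
  have hh_lip := lipschitzWith_convolution ψ.integrable_normed hg
    (hψ_supp.convolutionExists_left (ContinuousLinearMap.lsmul ℝ ℝ) hψ.continuous hg_int)
  rw [hψ_norm, Real.toNNReal_one, mul_one] at hh_lip
  refine ⟨_, _, hh, ?_, fun x => ?_, fun x => ?_⟩
  · exact (lipschitzWith_convolution (hψ'.integrable_of_hasCompactSupport hψ'_supp) hg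
      (hψ'_supp.convolutionExists_left _ hψ' hg_int)).uniformContinuous
  · exact ((hh x).le_of_lipschitz hh_lip).trans
      (mul_le_of_le_one_left K.2 ContinuousLinearMap.opNorm_lsmul_le)
  · refine ψ.dist_normed_convolution_le hg.continuous.aestronglyMeasurable fun y hy => ?_
    exact (hg.dist_le_mul y x).trans (by gcongr; exact (Metric.mem_ball.1 hy).le)

end Mollification

section Lipschitz

variable {E : Type*} [NormedAddCommGroup E] [InnerProductSpace ℝ E] [FiniteDimensional ℝ E]
  [MeasurableSpace E] [BorelSpace E]

theorem monotone_gaussQuantile_integral_sub {g : E → ℝ} {K : ℝ≥0} (hg : LipschitzWith K g) :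
    Monotone fun t => gaussQuantile (∫ x, gaussCDF (t - g x) ∂γ E) - t / √(1 + K ^ 2) := by
  choose h h' hh huc hK hnear using fun N : ℕ =>
    exists_hasFDerivAt_near_of_lipschitzWith hg (Nat.one_div_pos_of_nat (n := N) (α := ℝ))
  have hpointwise : ∀ x, Tendsto (fun N => h N x) atTop (𝓝 (g x)) := fun x => by
    refine tendsto_iff_dist_tendsto_zero.2 (squeeze_zero (fun _ => dist_nonneg) (hnear · x) ?_)
    simpa using tendsto_one_div_add_atTop_nhds_zero_nat.const_mul (K : ℝ)
  have hcont : ∀ N, Continuous (h N) := fun N =>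
    continuous_iff_continuousAt.2 fun x => (hh N x).continuousAt
  have hintegral : ∀ t, Tendsto (fun N => ∫ x, gaussCDF (t - h N x) ∂γ E) atTop
      (𝓝 (∫ x, gaussCDF (t - g x) ∂γ E)) := fun t =>
    tendsto_integral_of_dominated_convergence (fun _ => 1)
      (fun N => (integrable_gaussCDF_sub (hcont N).aestronglyMeasurable t).aestronglyMeasurable)
      (integrable_const 1) (fun N => .of_forall fun x => norm_gaussCDF_le_one _)
      (.of_forall fun x => (continuous_gaussCDF.tendsto _).comp ((hpointwise x).const_sub t))
  have hlim : ∀ t, Tendsto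
      (fun N => gaussQuantile (∫ x, gaussCDF (t - h N x) ∂γ E) - t / √(1 + K ^ 2)) atTop
      (𝓝 (gaussQuantile (∫ x, gaussCDF (t - g x) ∂γ E) - t / √(1 + K ^ 2))) := fun t =>
    ((hasDerivAt_gaussQuantile (integral_gaussCDF_sub_mem_Ioo
      hg.continuous.aestronglyMeasurable t)).continuousAt.tendsto.comp (hintegral t)).sub_const _
  exact fun s t hst => le_of_tendsto_of_tendsto' (hlim s) (hlim t) fun N =>
    monotone_gaussQuantile_integral_sub_of_hasFDerivAt (hh N) (huc N) (hK N) hst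

end Lipschitz

/-! ### The standard Gaussian measure -/

theorem isFiniteMeasure_stdGaussian (n : ℕ) : IsFiniteMeasure (stdGaussian n) := by
  have hint : Integrable fun x : EuclideanSpace ℝ (Fin n) => Real.exp (-(1 / 2) * ‖x‖ ^ 2) := by
    refine .of_integral_ne_zero ?_
    rw [GaussianFourier.integral_rexp_neg_mul_sq_norm (by norm_num)]
    positivity
  refine isFiniteMeasure_withDensity_ofReal
    ((hint.const_mul ((2 * Real.pi) ^ (-(n : ℝ) / 2))).congr (.of_forall fun x => ?_)).2
  dsimp only
  congr 2
  ring

theorem charFun_stdGaussian (n : ℕ) (t : EuclideanSpace ℝ (Fin n)) :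
    charFun (stdGaussian n) t = Complex.exp (-‖t‖ ^ 2 / 2) := by
  have hconst : (((2 * Real.pi) ^ (-(n : ℝ) / 2) : ℝ) : ℂ)
      * (Real.pi / (1 / 2 : ℂ)) ^ ((n : ℂ) / 2) = 1 := by
    have hbase : (Real.pi / (1 / 2 : ℂ)) = ((2 * Real.pi : ℝ) : ℂ) := by push_cast; ring
    have hexp : (n : ℂ) / 2 = ((n / 2 : ℝ) : ℂ) := by push_cast; rfl
    rw [hbase, hexp, ← Complex.ofReal_cpow (by positivity), ← Complex.ofReal_mul,
      ← Real.rpow_add (by positivity), neg_div, neg_add_cancel, Real.rpow_zero, Complex.ofReal_one]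
  have hdensity : ∀ x : EuclideanSpace ℝ (Fin n),
      (ENNReal.ofReal ((2 * Real.pi) ^ (-(n : ℝ) / 2) * Real.exp (-‖x‖ ^ 2 / 2))).toReal •
        Complex.exp (⟪x, t⟫ * Complex.I)
      = ((2 * Real.pi) ^ (-(n : ℝ) / 2) : ℝ) *
        Complex.exp (-(1 / 2 : ℂ) * ‖x‖ ^ 2 + Complex.I * ⟪t, x⟫) := fun x => by
    rw [ENNReal.toReal_ofReal (by positivity), Complex.real_smul, Complex.exp_add,
      real_inner_comm, mul_comm Complex.I]
    push_cast
    ring_nf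
  rw [charFun_apply, stdGaussian,
    integral_withDensity_eq_integral_toReal_smul (by fun_prop) (by simp)]
  simp only [hdensity]
  rw [integral_const_mul, GaussianFourier.integral_cexp_neg_mul_sq_norm_add (by norm_num),
    finrank_euclideanSpace_fin, ← mul_assoc, hconst, one_mul, Complex.I_sq]
  ring_nf

theorem stdGaussian_eq_probabilityTheory_stdGaussian (n : ℕ) :
    stdGaussian n = γ (EuclideanSpace ℝ (Fin n)) := by
  have := isFiniteMeasure_stdGaussian n
  refine Measure.ext_of_charFun (funext fun t => ?_)
  rw [charFun_stdGaussian, ProbabilityTheory.charFun_stdGaussian]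

theorem enlarge_eq_thickening {n : ℕ} (A : Set (EuclideanSpace ℝ (Fin n))) (ε : ℝ) :
    enlarge A ε = Metric.thickening ε A := by
  ext x
  simp only [enlarge, mem_ofPred_eq, Metric.mem_thickening_iff, dist_eq_norm]

/-! ### Isoperimetry -/

section Distance

variable {X : Type*} [PseudoMetricSpace X] [MeasurableSpace X] [BorelSpace X] {μ : Measure X}
  [IsProbabilityMeasure μ] {A : Set X}

theorem gaussCDF_mul_measureReal_le_integral (K t : ℝ) :
    gaussCDF t * μ.real A ≤ ∫ x, gaussCDF (t - K * Metric.infDist x A) ∂μ := by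
  have hint := integrable_gaussCDF_sub (μ := μ)
    ((Metric.continuous_infDist_pt A).const_mul K).aestronglyMeasurable t
  calc gaussCDF t * μ.real A
      ≤ gaussCDF t * μ.real (closure A) := by
        gcongr
        exacts [(gaussCDF_mem_Ioo t).1.le, measure_ne_top μ _, subset_closure]
    _ = ∫ _ in closure A, gaussCDF t ∂μ := by
        rw [setIntegral_const, smul_eq_mul, mul_comm]
    _ = ∫ x in closure A, gaussCDF (t - K * Metric.infDist x A) ∂μ := by
        refine setIntegral_congr_fun isClosed_closure.measurableSet fun x hx => ?_
        simp only [Metric.infDist_zero_of_mem_closure hx, mul_zero, sub_zero]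
    _ ≤ ∫ x, gaussCDF (t - K * Metric.infDist x A) ∂μ :=
        setIntegral_le_integral hint (.of_forall fun x => (gaussCDF_mem_Ioo _).1.le)

theorem integral_gaussCDF_le_measureReal_thickening_add (hA : A.Nonempty) {K : ℝ} (hK : 0 ≤ K)
    (t ε : ℝ) :
    ∫ x, gaussCDF (t - K * Metric.infDist x A) ∂μ
      ≤ μ.real (Metric.thickening ε A) + gaussCDF (t - K * ε) := by
  have hthick : MeasurableSet (Metric.thickening ε A) := Metric.isOpen_thickening.measurableSet
  calc ∫ x, gaussCDF (t - K * Metric.infDist x A) ∂μ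
      ≤ ∫ x, ((Metric.thickening ε A).indicator 1 x + gaussCDF (t - K * ε)) ∂μ := by
        refine integral_mono (integrable_gaussCDF_sub
          ((Metric.continuous_infDist_pt A).const_mul K).aestronglyMeasurable t)
          (((integrable_const 1).indicator hthick).add (integrable_const _)) fun x => ?_
        by_cases hx : x ∈ Metric.thickening ε A
        · simp only [hx, indicator_of_mem, Pi.one_apply]
          linarith [(gaussCDF_mem_Ioo (t - K * Metric.infDist x A)).2,
            (gaussCDF_mem_Ioo (t - K * ε)).1]
        · have hdist : ε ≤ Metric.infDist x A :=
            not_lt.1 fun h => hx ((Metric.mem_thickening_iff_infDist_lt hA).2 h)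
          simp only [hx, not_false_eq_true, indicator_of_notMem, zero_add]
          exact strictMono_gaussCDF.monotone (by gcongr)
    _ = μ.real (Metric.thickening ε A) + gaussCDF (t - K * ε) := by
        rw [integral_add ((integrable_const 1).indicator hthick) (integrable_const _),
          integral_indicator_one hthick, integral_const, probReal_univ, one_smul]

end Distance

section Isoperimetry

variable {E : Type*} [NormedAddCommGroup E] [InnerProductSpace ℝ E] [FiniteDimensional ℝ E]
  [MeasurableSpace E] [BorelSpace E]

theorem gaussCDF_add_div_le {A : Set E} {a : ℝ} (ha : gaussCDF a ≤ (γ E).real A) (ε : ℝ)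
    {K : ℝ≥0} {s t : ℝ} (hst : s ≤ t) :
    gaussCDF (gaussQuantile (gaussCDF s * gaussCDF a) + (t - s) / √(1 + K ^ 2))
      ≤ (γ E).real (Metric.thickening ε A) + gaussCDF (t - K * ε) := by
  have hA : A.Nonempty := nonempty_of_measureReal_ne_zero ((gaussCDF_mem_Ioo a).1.trans_le ha).ne'
  have hlip : LipschitzWith K fun x => K * Metric.infDist x A := by
    simpa [Function.comp_def] using
      (lipschitzWith_smul (K : ℝ)).comp (Metric.lipschitz_infDist_pt A)
  have hmem := integral_gaussCDF_sub_mem_Ioo (μ := γ E) hlip.continuous.aestronglyMeasurable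
  have hstart : gaussQuantile (gaussCDF s * gaussCDF a)
      ≤ gaussQuantile (∫ x, gaussCDF (s - K * Metric.infDist x A) ∂γ E) := by
    refine strictMonoOn_gaussQuantile.monotoneOn ⟨?_, ?_⟩ (hmem s) ?_
    · exact mul_pos (gaussCDF_mem_Ioo s).1 (gaussCDF_mem_Ioo a).1
    · exact mul_lt_one_of_nonneg_of_lt_one_left (gaussCDF_mem_Ioo s).1.le (gaussCDF_mem_Ioo s).2
        (gaussCDF_mem_Ioo a).2.le
    · exact (mul_le_mul_of_nonneg_left ha (gaussCDF_mem_Ioo s).1.le).trans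
        (gaussCDF_mul_measureReal_le_integral _ _)
  have hgrowth := monotone_gaussQuantile_integral_sub hlip hst
  dsimp only at hgrowth
  calc gaussCDF (gaussQuantile (gaussCDF s * gaussCDF a) + (t - s) / √(1 + K ^ 2))
      ≤ gaussCDF (gaussQuantile (∫ x, gaussCDF (t - K * Metric.infDist x A) ∂γ E)) := by
        refine strictMono_gaussCDF.monotone ?_
        rw [sub_div]
        linarith
    _ = ∫ x, gaussCDF (t - K * Metric.infDist x A) ∂γ E := gaussCDF_gaussQuantile (hmem t)
    _ ≤ (γ E).real (Metric.thickening ε A) + gaussCDF (t - K * ε) :=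
        integral_gaussCDF_le_measureReal_thickening_add hA K.2 t ε

theorem tendsto_div_sqrt_one_add_sq : Tendsto (fun x : ℝ => x / √(1 + x ^ 2)) atTop (𝓝 1) := by
  simp only [← Real.sin_arctan]
  have h := Real.continuous_sin.tendsto (Real.pi / 2)
  rw [Real.sin_pi_div_two] at h
  exact h.comp (Real.tendsto_arctan_atTop.mono_right nhdsWithin_le_nhds)

theorem gaussCDF_add_le_measureReal_thickening {A : Set E} {a : ℝ}
    (ha : gaussCDF a ≤ (γ E).real A) {ε : ℝ} (hε : 0 < ε) :
    gaussCDF (a + ε) ≤ (γ E).real (Metric.thickening ε A) := by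
  have hstart : Tendsto (fun s => gaussQuantile (gaussCDF s * gaussCDF a)) atTop (𝓝 a) := by
    have h := tendsto_gaussCDF_atTop.mul_const (gaussCDF a)
    rw [one_mul] at h
    have hQ := (hasDerivAt_gaussQuantile (gaussCDF_mem_Ioo a)).continuousAt.tendsto
    rw [gaussQuantile_gaussCDF] at hQ
    exact hQ.comp h
  have hrate : Tendsto (fun s : ℝ => (s ^ 2 * ε - s - s) / √(1 + (s ^ 2) ^ 2)) atTop (𝓝 ε) := by
    have h := (tendsto_div_sqrt_one_add_sq.comp (tendsto_pow_atTop two_ne_zero)).mul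
      ((tendsto_inv_atTop_zero.const_mul 2).const_sub ε)
    rw [mul_zero, sub_zero, one_mul] at h
    refine h.congr' ?_
    filter_upwards [eventually_gt_atTop 0] with s hs
    simp only [Function.comp_apply]
    field_simp
    ring
  have herror : Tendsto (fun s => gaussCDF (-s)) atTop (𝓝 0) :=
    tendsto_gaussCDF_atBot.comp tendsto_neg_atTop_atBot
  -- The slope `s²` and the times `s` and `s² * ε - s` make start, rate and error converge at once.
  have hbound : ∀ᶠ s : ℝ in atTop, gaussCDF (gaussQuantile (gaussCDF s * gaussCDF a)
      + (s ^ 2 * ε - s - s) / √(1 + (s ^ 2) ^ 2))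
      ≤ (γ E).real (Metric.thickening ε A) + gaussCDF (-s) := by
    filter_upwards [eventually_ge_atTop (2 / ε), eventually_ge_atTop 0] with s hs hs0
    have hst : s ≤ s ^ 2 * ε - s := by
      nlinarith [(div_le_iff₀ hε).1 hs]
    have h := gaussCDF_add_div_le ha ε (K := (s ^ 2).toNNReal) hst
    rwa [Real.coe_toNNReal _ (sq_nonneg s), sub_sub_cancel_left] at h
  simpa only [add_zero] using le_of_tendsto_of_tendsto
    ((continuous_gaussCDF.tendsto _).comp (hstart.add hrate)) (herror.const_add _) hbound

theorem measureReal_stdGaussian_halfSpace {u : E} (hu : ‖u‖ = 1) (a : ℝ) :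
    (γ E).real {x | ⟪u, x⟫ < a} = gaussCDF a := by
  have hmap : (γ E).map (innerSL ℝ u) = gaussianReal 0 1 := by
    rw [ProbabilityTheory.IsGaussian.map_eq_gaussianReal,
      ProbabilityTheory.integral_strongDual_stdGaussian,
      ProbabilityTheory.variance_dual_stdGaussian, innerSL_apply_norm, hu, one_pow,
      Real.toNNReal_one]
  rw [gaussCDF_eq_measureReal_Iio, ← hmap,
    map_measureReal_apply (innerSL ℝ u).continuous.measurable measurableSet_Iio]
  rfl

theorem thickening_halfSpace_subset {F : Type*} [NormedAddCommGroup F] [InnerProductSpace ℝ F]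
    {u : F} (hu : ‖u‖ ≤ 1) (a ε : ℝ) :
    Metric.thickening ε {x | ⟪u, x⟫ < a} ⊆ {x | ⟪u, x⟫ < a + ε} := by
  intro x hx
  obtain ⟨y, hy, hxy⟩ := Metric.mem_thickening_iff.1 hx
  rw [dist_eq_norm] at hxy
  have hle : ⟪u, x - y⟫ ≤ ‖x - y‖ :=
    (real_inner_le_norm _ _).trans (mul_le_of_le_one_left (norm_nonneg _) hu)
  rw [inner_sub_right] at hle
  simp only [mem_ofPred_eq] at hy ⊢
  linarith

theorem ehrhard_rearrangement_isoperimetric_general {u : E} (hu : ‖u‖ = 1) {A : Set E} {ε : ℝ}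
    (hε : 0 < ε) {a : ℝ} (ha : gaussCDF a ≤ (γ E).real A) :
    γ E (Metric.thickening ε {x | ⟪u, x⟫ < a}) ≤ γ E (Metric.thickening ε A) := by
  refine (measure_mono (thickening_halfSpace_subset hu.le a ε)).trans ?_
  rw [← ENNReal.toReal_le_toReal (measure_ne_top _ _) (measure_ne_top _ _)]
  exact (measureReal_stdGaussian_halfSpace hu _).trans_le
    (gaussCDF_add_le_measureReal_thickening ha hε)

end Isoperimetry

theorem ehrhard_rearrangement_isoperimetric {n : ℕ} (hn : 0 < n)
    (A : Set (EuclideanSpace ℝ (Fin n))) (hA : MeasurableSet A)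
    (ε : ℝ) (hε : 0 < ε) (a : ℝ) (ha : gaussCDF a = (stdGaussian n A).toReal) :
    stdGaussian n (enlarge {x | x ⟨0, hn⟩ < a} ε) ≤ stdGaussian n (enlarge A ε) := by
  simp only [stdGaussian_eq_probabilityTheory_stdGaussian, enlarge_eq_thickening] at ha ⊢
  simpa [EuclideanSpace.inner_single_left] using ehrhard_rearrangement_isoperimetric_general
    (u := EuclideanSpace.single ⟨0, hn⟩ (1 : ℝ)) (by simp) hε ha.le
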